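/- arXiv:math-ph/0507019 — 3 statements merged into one kernel-verified Lean document; each statement's English description precedes it below -/
import Mathlib

section
/- Let H be a complex Hilbert space and let R be an abelian von Neumann algebra acting on H. Let P(R) := {p ∈ R | p* = p and p² = p} be the set of projections in R, partially ordered by p ≤ q :⟺ pq = p, and let Q(P(R)) be its Stone spectrum. Let Ω be the Gelfand spectrum of R, i.e. the space of nonzero multiplicative linear functionals (characters) τ : R → ℂ with the weak*-topology. Then the map τ ↦ β(τ) := {p ∈ P(R) | p ≠ 0 and τ(p) = 1} is well defined (each β(τ) is a quasipoint of P(R)) and is a homeomorphism from Ω onto Q(P(R)). -/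
/-!
For an abelian von Neumann algebra `R` with character space `Ω`, a character sends each projection
to `0` or `1`, so `β(τ)` contains exactly one of `p` and `1 - p` for each projection `p`.
It is maximal because a strictly larger directed set would contain both `q` and `1 - q` for some `q`, hence also `0`.

*Surjectivity* needs only that `Ω` is compact and that characters separate the elements of `R`:
for a quasipoint `B` the closed sets `{τ | τ p = 1}`, `p ∈ B`, are nonempty and directed, so some
`τ` lies in all of them; then `B ⊆ β(τ)`, and maximality of `B` gives equality.

*Injectivity* is where the double commutant enters. For characters `σ ≠ τ`, Urysohn's lemma and
Gelfand duality produce `f, g ∈ R` with `g f = 0` and `σ f = τ g = 1`. The projection `p` onto the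
closure of the range of `f` belongs to `R`, since that subspace is invariant under the commutant.
Since `p f = f` and `g p = 0`, one gets `σ p = 1` and `τ p = 0`.

The map `β` is continuous because each `{τ | τ p = 1}` is open, and the Stone spectrum is Hausdorff
because distinct `β(σ)`, `β(τ)` are separated by `Q_p` and `Q_{1 - p}`. A continuous bijection
from a compact space onto a Hausdorff one is a homeomorphism.
-/

open WeakDual

/-- The set of projections of a von Neumann algebra `R`, as a type:
selfadjoint idempotent elements of `R`. -/
def VNProj {H : Type*} [NormedAddCommGroup H] [InnerProductSpace ℂ H]
    [CompleteSpace H] (R : VonNeumannAlgebra H) : Type _ :=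
  {p : ↥R.toStarSubalgebra // star p = p ∧ p * p = p}

/-- The zero projection. -/
noncomputable def VNProj.zero {H : Type*} [NormedAddCommGroup H]
    [InnerProductSpace ℂ H] [CompleteSpace H] (R : VonNeumannAlgebra H) :
    VNProj R :=
  ⟨0, by simp, by simp⟩

/-- The order on projections: `p ≤ q ↔ p q = p`. -/
def VNProj.le {H : Type*} [NormedAddCommGroup H] [InnerProductSpace ℂ H]
    [CompleteSpace H] {R : VonNeumannAlgebra H} (p q : VNProj R) : Prop :=
  p.1 * q.1 = p.1

/-- A quasipoint of the projection lattice `P(R)`: a nonempty set of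
projections not containing `0`, downward directed, and maximal among subsets
with these properties. -/
def IsQuasipointVN {H : Type*} [NormedAddCommGroup H] [InnerProductSpace ℂ H]
    [CompleteSpace H] (R : VonNeumannAlgebra H) (B : Set (VNProj R)) : Prop :=
  B.Nonempty ∧ VNProj.zero R ∉ B ∧
  (∀ a ∈ B, ∀ b ∈ B, ∃ c ∈ B, VNProj.le c a ∧ VNProj.le c b) ∧
  ∀ C : Set (VNProj R), VNProj.zero R ∉ C →
    (∀ a ∈ C, ∀ b ∈ C, ∃ c ∈ C, VNProj.le c a ∧ VNProj.le c b) → B ⊆ C → B = C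

/-- The Stone spectrum of the projection lattice of a von Neumann algebra. -/
def StoneSpectrumVN {H : Type*} [NormedAddCommGroup H] [InnerProductSpace ℂ H]
    [CompleteSpace H] (R : VonNeumannAlgebra H) : Type _ :=
  {B : Set (VNProj R) // IsQuasipointVN R B}

/-- The topology on the Stone spectrum generated by the sets
`Q_p = {B | p ∈ B}`. -/
instance {H : Type*} [NormedAddCommGroup H] [InnerProductSpace ℂ H]
    [CompleteSpace H] (R : VonNeumannAlgebra H) :
    TopologicalSpace (StoneSpectrumVN R) :=
  TopologicalSpace.generateFrom
    (Set.range fun p : VNProj R => {B : StoneSpectrumVN R | p ∈ B.1})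

/-- The set `β(τ) = {p ∈ P(R) | p ≠ 0 ∧ τ(p) = 1}` associated to a character
`τ` of `R`. -/
def betaSet {H : Type*} [NormedAddCommGroup H] [InnerProductSpace ℂ H]
    [CompleteSpace H] (R : VonNeumannAlgebra H)
    (τ : characterSpace ℂ ↥R.toStarSubalgebra) : Set (VNProj R) :=
  {p : VNProj R | p ≠ VNProj.zero R ∧ τ p.1 = 1}

section CharacterSpace

variable {A : Type*} [CommCStarAlgebra A]

lemma exists_orthogonal_of_ne {σ τ : characterSpace ℂ A} (h : σ ≠ τ) :
    ∃ f g : A, g * f = 0 ∧ σ f = 1 ∧ τ g = 1 := by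
  obtain ⟨u, hu0, hu1, -⟩ := exists_continuous_zero_one_of_isClosed
    (isClosed_singleton (x := τ)) (isClosed_singleton (x := σ)) (by simpa using h.symm)
  have hτ : u τ = 0 := hu0 rfl
  have hσ : u σ = 1 := hu1 rfl
  -- `f` and `g` are the positive and negative parts of `2u - 1`, pulled back to `A`.
  let F : C(characterSpace ℂ A, ℂ) := ⟨fun x => ((max (2 * u x - 1) 0 : ℝ) : ℂ), by fun_prop⟩
  let G : C(characterSpace ℂ A, ℂ) := ⟨fun x => ((max (1 - 2 * u x) 0 : ℝ) : ℂ), by fun_prop⟩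
  obtain ⟨f, hf⟩ := (gelfandTransform_bijective A).2 F
  obtain ⟨g, hg⟩ := (gelfandTransform_bijective A).2 G
  refine ⟨f, g, (gelfandTransform_bijective A).1 ?_, ?_, ?_⟩
  · rw [map_mul, hf, hg, map_zero]
    ext x
    simp only [ContinuousMap.mul_apply, ContinuousMap.coe_mk, F, G, ContinuousMap.zero_apply]
    rw [← Complex.ofReal_mul, Complex.ofReal_eq_zero, mul_eq_zero]
    rcases le_total (2 * u x) 1 with h | h
    · exact Or.inr (max_eq_right (by linarith))
    · exact Or.inl (max_eq_right (by linarith))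
  · have := DFunLike.congr_fun hf σ
    simp only [WeakDual.gelfandTransform_apply_apply] at this
    rw [this]; simp [F, hσ]; norm_num
  · have := DFunLike.congr_fun hg τ
    simp only [WeakDual.gelfandTransform_apply_apply] at this
    rw [this]; simp [G, hτ]

lemma exists_character_ne_zero {a : A} (ha : a ≠ 0) : ∃ τ : characterSpace ℂ A, τ a ≠ 0 := by
  by_contra! h
  exact ha ((gelfandTransform_bijective A).1 (by rw [map_zero]; ext τ; simpa using h τ))

end CharacterSpace

section VN

variable {H : Type*} [NormedAddCommGroup H] [InnerProductSpace ℂ H] [CompleteSpace H]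
  {R : VonNeumannAlgebra H}

lemma VonNeumannAlgebra.isClosed (R : VonNeumannAlgebra H) :
    IsClosed (R.toStarSubalgebra : Set (H →L[ℂ] H)) := by
  rw [VonNeumannAlgebra.coe_toStarSubalgebra, ← R.centralizer_centralizer]
  exact Set.isClosed_centralizer _

/-- The commutative C⋆-algebra structure on an abelian von Neumann algebra. -/
noncomputable abbrev VonNeumannAlgebra.commCStarAlgebra (R : VonNeumannAlgebra H)
    (habel : ∀ a b : ↥R.toStarSubalgebra, a * b = b * a) :
    CommCStarAlgebra ↥R.toStarSubalgebra :=
  haveI := R.isClosed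
  { StarSubalgebra.cstarAlgebra R.toStarSubalgebra with mul_comm := habel }

/-- The range projection of `f ∈ R` lies in `R`: it fixes `f` from the left and is annihilated on
the left by every left annihilator of `f`. -/
lemma exists_rangeProj (f : ↥R.toStarSubalgebra) :
    ∃ p : VNProj R, p.1 * f = f ∧ ∀ g : ↥R.toStarSubalgebra, g * f = 0 → g * p.1 = 0 := by
  let f' : H →L[ℂ] H := f.1
  let K : Submodule ℂ H := f'.range.topologicalClosure
  have : CompleteSpace K := f'.range.isClosed_topologicalClosure.completeSpace_coe
  have hP : IsStarProjection K.starProjection := isStarProjection_starProjection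
  have hmem : K.starProjection ∈ R := by
    rw [VonNeumannAlgebra.IsStarProjection.mem_iff hP]
    intro y hy
    rw [Submodule.range_starProjection, Module.End.mem_invtSubmodule]
    have hc : f' * y = y * f' := VonNeumannAlgebra.mem_commutant_iff.1 hy f' f.2
    refine Submodule.topologicalClosure_minimal _ ?_
      (f'.range.isClosed_topologicalClosure.preimage y.continuous)
    rintro _ ⟨x, rfl⟩
    exact f'.range.le_topologicalClosure ⟨y x, congr($hc x)⟩
  refine ⟨⟨⟨K.starProjection, hmem⟩, Subtype.ext hP.isSelfAdjoint, Subtype.ext hP.isIdempotentElem⟩,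
    Subtype.ext ?_, fun g hg => Subtype.ext ?_⟩
  · ext x
    exact Submodule.starProjection_eq_self_iff.2 (f'.range.le_topologicalClosure ⟨x, rfl⟩)
  · have hker : K ≤ LinearMap.ker (g.1 : H →L[ℂ] H).toLinearMap := by
      refine Submodule.topologicalClosure_minimal _ ?_ (g.1 : H →L[ℂ] H).isClosed_ker
      rintro _ ⟨x, rfl⟩
      exact congr(($hg).1 x)
    ext x
    exact hker (Submodule.starProjection_apply_mem K x)

/-- The complementary projection `1 - p`. -/
noncomputable def VNProj.compl (p : VNProj R) : VNProj R :=
  ⟨1 - p.1, by rw [star_sub, star_one, p.2.1], by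
    rw [sub_mul, mul_sub, mul_sub, p.2.2]; simp⟩

variable (τ : characterSpace ℂ ↥R.toStarSubalgebra)

lemma character_proj (p : VNProj R) : τ p.1 = 0 ∨ τ p.1 = 1 := by
  have h : τ p.1 * τ p.1 = τ p.1 := by rw [← map_mul, p.2.2]
  exact (mul_eq_zero.1 (show τ p.1 * (τ p.1 - 1) = 0 by rw [mul_sub, h]; ring)).imp id sub_eq_zero.1

lemma mem_betaSet {p : VNProj R} : p ∈ betaSet R τ ↔ τ p.1 = 1 := by
  refine ⟨fun h => h.2, fun h => ⟨?_, h⟩⟩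
  rintro rfl
  exact zero_ne_one ((map_zero τ).symm.trans h)

lemma compl_mem_betaSet {p : VNProj R} : p.compl ∈ betaSet R τ ↔ p ∉ betaSet R τ := by
  have h : τ p.compl.1 = 1 - τ p.1 := by rw [VNProj.compl, map_sub, map_one]
  rw [mem_betaSet, mem_betaSet, h]
  rcases character_proj τ p with h | h <;> simp [h]

/-- A directed set of nonzero projections contains no pair `p`, `1 - p`. -/
lemma compl_notMem {B : Set (VNProj R)} (h0 : VNProj.zero R ∉ B)
    (hd : ∀ a ∈ B, ∀ b ∈ B, ∃ c ∈ B, VNProj.le c a ∧ VNProj.le c b) {p : VNProj R}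
    (hp : p ∈ B) : p.compl ∉ B := by
  intro hp'
  obtain ⟨c, hc, h1, h2⟩ := hd _ hp _ hp'
  have h1' : c.1 * p.1 = c.1 := h1
  have h2' : c.1 * (1 - p.1) = c.1 := h2
  rw [mul_sub, h1', mul_one, sub_self] at h2'
  exact h0 ((Subtype.ext h2' : VNProj.zero R = c) ▸ hc)

lemma isQuasipoint_betaSet (habel : ∀ a b : ↥R.toStarSubalgebra, a * b = b * a) :
    IsQuasipointVN R (betaSet R τ) := by
  refine ⟨⟨⟨1, star_one _, one_mul 1⟩, (mem_betaSet τ).2 (map_one τ)⟩, fun h => h.1 rfl, ?_, ?_⟩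
  · intro a ha b hb
    rw [mem_betaSet] at ha hb
    refine ⟨⟨a.1 * b.1, ?_, ?_⟩, (mem_betaSet τ).2 ?_, ?_, ?_⟩
    · rw [star_mul, a.2.1, b.2.1, habel]
    · rw [mul_assoc, ← mul_assoc b.1, habel b.1 a.1, mul_assoc, b.2.2, ← mul_assoc, a.2.2]
    · rw [map_mul, ha, hb, one_mul]
    · change a.1 * b.1 * a.1 = a.1 * b.1
      rw [habel, ← mul_assoc, a.2.2]
    · change a.1 * b.1 * b.1 = a.1 * b.1
      rw [mul_assoc, b.2.2]
  · intro C h0 hd hBC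
    refine hBC.antisymm fun q hq => ?_
    by_contra hqB
    exact compl_notMem h0 hd hq (hBC ((compl_mem_betaSet τ).2 hqB))

lemma betaSet_injective (habel : ∀ a b : ↥R.toStarSubalgebra, a * b = b * a) :
    Function.Injective (betaSet R) := by
  intro σ τ h
  by_contra hne
  let := R.commCStarAlgebra habel
  obtain ⟨f, g, hgf, hf, hg⟩ := exists_orthogonal_of_ne hne
  obtain ⟨p, hpf, hp⟩ := exists_rangeProj f
  have h1 : σ p.1 = 1 := by
    have := congrArg σ hpf
    rwa [map_mul, hf, mul_one] at this
  have h2 : τ p.1 = 0 := by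
    have := congrArg τ (hp g hgf)
    rwa [map_mul, hg, one_mul, map_zero] at this
  have h3 : p ∈ betaSet R τ := h ▸ (mem_betaSet σ).2 h1
  exact zero_ne_one (h2.symm.trans ((mem_betaSet τ).1 h3))

lemma exists_betaSet_eq (habel : ∀ a b : ↥R.toStarSubalgebra, a * b = b * a)
    {B : Set (VNProj R)} (hB : IsQuasipointVN R B) :
    ∃ τ : characterSpace ℂ ↥R.toStarSubalgebra, betaSet R τ = B := by
  let := R.commCStarAlgebra habel
  obtain ⟨hne, h0, hd, hmax⟩ := hB
  have : Nonempty B := hne.to_subtype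
  let Z : B → Set (characterSpace ℂ ↥R.toStarSubalgebra) := fun p => {τ | τ p.1.1 = 1}
  have hZc (p : B) : IsClosed (Z p) :=
    isClosed_singleton.preimage (gelfandTransform ℂ ↥R.toStarSubalgebra p.1.1).continuous
  obtain ⟨τ, hτ⟩ := IsCompact.nonempty_iInter_of_directed_nonempty_isCompact_isClosed Z
    (by
      rintro ⟨a, ha⟩ ⟨b, hb⟩
      obtain ⟨c, hc, hca, hcb⟩ := hd a ha b hb
      have key (d : VNProj R) (hcd : VNProj.le c d) (τ : characterSpace ℂ ↥R.toStarSubalgebra)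
          (hτ : τ c.1 = 1) : τ d.1 = 1 := by
        have := congrArg τ hcd
        rwa [map_mul, hτ, one_mul] at this
      exact ⟨⟨c, hc⟩, fun τ => key a hca τ, fun τ => key b hcb τ⟩)
    (by
      rintro ⟨p, hp⟩
      have hp0 : p.1 ≠ 0 := fun h => h0 ((Subtype.ext h : p = VNProj.zero R) ▸ hp)
      obtain ⟨τ, hτ⟩ := exists_character_ne_zero hp0
      exact ⟨τ, (character_proj τ p).resolve_left hτ⟩)
    (fun p => (hZc p).isCompact) hZc
  obtain ⟨-, hz, hdir, -⟩ := isQuasipoint_betaSet τ habel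
  exact ⟨τ, (hmax _ hz hdir fun p hp =>
    (mem_betaSet τ).2 (Set.mem_iInter.1 hτ ⟨p, hp⟩)).symm⟩

/-- The map `β`, with values in the Stone spectrum. -/
noncomputable def beta (habel : ∀ a b : ↥R.toStarSubalgebra, a * b = b * a)
    (τ : characterSpace ℂ ↥R.toStarSubalgebra) : StoneSpectrumVN R :=
  ⟨betaSet R τ, isQuasipoint_betaSet τ habel⟩

lemma isOpen_setOf_mem (p : VNProj R) : IsOpen {B : StoneSpectrumVN R | p ∈ B.1} :=
  TopologicalSpace.isOpen_generateFrom_of_mem ⟨p, rfl⟩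

lemma continuous_beta (habel : ∀ a b : ↥R.toStarSubalgebra, a * b = b * a) :
    Continuous (beta habel) := by
  refine continuous_generateFrom_iff.2 ?_
  rintro _ ⟨p, rfl⟩
  -- On a projection a character takes only the values `0` and `1`, so `τ p = 1` iff `τ p ≠ 0`.
  have : beta habel ⁻¹' {B : StoneSpectrumVN R | p ∈ B.1} =
      gelfandTransform ℂ ↥R.toStarSubalgebra p.1 ⁻¹' {0}ᶜ := by
    ext τ
    change p ∈ betaSet R τ ↔ τ p.1 ≠ 0
    rw [mem_betaSet]
    rcases character_proj τ p with h | h <;> simp [h]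
  rw [this]
  exact isOpen_compl_singleton.preimage (ContinuousMap.continuous _)

lemma t2Space_stoneSpectrum (habel : ∀ a b : ↥R.toStarSubalgebra, a * b = b * a) :
    T2Space (StoneSpectrumVN R) := by
  refine ⟨fun B C hBC => ?_⟩
  obtain ⟨p, hpB, hpC⟩ : ∃ p ∈ B.1, p ∉ C.1 := by
    by_contra! h
    exact hBC (Subtype.ext (B.2.2.2.2 _ C.2.2.1 C.2.2.2.1 h))
  refine ⟨_, _, isOpen_setOf_mem p, isOpen_setOf_mem p.compl, hpB, ?_, ?_⟩
  · obtain ⟨τ, hτ⟩ := exists_betaSet_eq habel C.2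
    change p.compl ∈ C.1
    rw [← hτ] at hpC ⊢
    exact (compl_mem_betaSet τ).2 hpC
  · exact Set.disjoint_left.2 fun D hD hD' => compl_notMem D.2.2.1 D.2.2.2.1 hD hD'

end VN

/-- For an abelian von Neumann algebra `R`, the map `τ ↦ β(τ)` is well defined
(each `β(τ)` is a quasipoint of `P(R)`) and is a homeomorphism from the Gelfand
spectrum of `R` (the character space with the weak*-topology) onto the Stone
spectrum of `P(R)`. -/
theorem stmt2 {H : Type*} [NormedAddCommGroup H] [InnerProductSpace ℂ H]
    [CompleteSpace H] (R : VonNeumannAlgebra H)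
    (habel : ∀ a b : ↥R.toStarSubalgebra, a * b = b * a) :
    (∀ τ : characterSpace ℂ ↥R.toStarSubalgebra, IsQuasipointVN R (betaSet R τ)) ∧
    ∃ e : characterSpace ℂ ↥R.toStarSubalgebra ≃ₜ StoneSpectrumVN R,
      ∀ τ, (e τ).1 = betaSet R τ := by
  let := R.commCStarAlgebra habel
  have := t2Space_stoneSpectrum habel
  have hbij : Function.Bijective (beta habel) :=
    ⟨fun σ τ h => betaSet_injective habel (congrArg Subtype.val h), fun B =>
      (exists_betaSet_eq habel B.2).imp fun τ hτ => Subtype.ext hτ⟩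
  exact ⟨fun τ => isQuasipoint_betaSet τ habel,
    (continuous_beta habel).homeoOfEquivCompactToT2 (f := Equiv.ofBijective _ hbij), fun _ => rfl⟩
end

section
/- Let H be a complex Hilbert space. The atomic quasipoints B_{ℂx} := {U ∈ L(H) | x ∈ U} (for 0 ≠ x ∈ H) are precisely the isolated points of the Stone spectrum Q(L(H)), and the set of atomic quasipoints is dense in Q(L(H)). -/
/-!
A quasipoint is upward closed by maximality, i.e. it is a maximal filter of closed subspaces
(`IsQuasipointCS.mem_of_le`). Consequently the sets `Q_U` form a base of the topology
(`exists_QSetCS_subset`), and every nonempty `Q_U` contains an atomic quasipoint, namely the one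
at any nonzero vector of `U`. This gives density and shows that an isolated point is atomic.
Conversely, the line `ℂx` is an atom of the lattice, so a directed family that contains it and
omits `0` consists of subspaces containing `x` (`mem_of_lineCS_mem`). Hence the atomic family at
`x` is maximal, and it is the only quasipoint in `Q_{ℂx}`.
-/

/-- The lattice `L(H)` of closed (linear) subspaces of a Hilbert space `H`. -/
def ClosedSubspace (H : Type*) [NormedAddCommGroup H] [InnerProductSpace ℂ H] : Type _ :=
  {U : Submodule ℂ H // IsClosed (U : Set H)}

/-- The zero subspace, as an element of `L(H)`. -/
def zeroCS (H : Type*) [NormedAddCommGroup H] [InnerProductSpace ℂ H] :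
    ClosedSubspace H :=
  ⟨⊥, by rw [Submodule.bot_coe]; exact isClosed_singleton⟩

/-- A quasipoint of `L(H)`: a nonempty set of closed subspaces not containing
the zero subspace, downward directed (for `U, V ∈ B` there is `W ∈ B` with
`W ⊆ U ∩ V`), and maximal among subsets with these properties. -/
def IsQuasipointCS {H : Type*} [NormedAddCommGroup H] [InnerProductSpace ℂ H]
    (B : Set (ClosedSubspace H)) : Prop :=
  B.Nonempty ∧ zeroCS H ∉ B ∧
  (∀ U ∈ B, ∀ V ∈ B, ∃ W ∈ B, W.1 ≤ U.1 ⊓ V.1) ∧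
  ∀ C : Set (ClosedSubspace H), zeroCS H ∉ C →
    (∀ U ∈ C, ∀ V ∈ C, ∃ W ∈ C, W.1 ≤ U.1 ⊓ V.1) → B ⊆ C → B = C

/-- The Stone spectrum `Q(L(H))` of the lattice of closed subspaces. -/
def StoneSpectrumCS (H : Type*) [NormedAddCommGroup H] [InnerProductSpace ℂ H] :
    Type _ :=
  {B : Set (ClosedSubspace H) // IsQuasipointCS B}

/-- The basic sets `Q_U = {B | U ∈ B}`. -/
def QSetCS {H : Type*} [NormedAddCommGroup H] [InnerProductSpace ℂ H]
    (U : ClosedSubspace H) : Set (StoneSpectrumCS H) :=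
  {B : StoneSpectrumCS H | U ∈ B.1}

/-- The topology on `Q(L(H))` generated by the sets `Q_U`. -/
instance {H : Type*} [NormedAddCommGroup H] [InnerProductSpace ℂ H] :
    TopologicalSpace (StoneSpectrumCS H) :=
  TopologicalSpace.generateFrom (Set.range (QSetCS (H := H)))

section

variable {H : Type*} [NormedAddCommGroup H] [InnerProductSpace ℂ H]

/-- The line `ℂx` as a closed subspace. -/
def lineCS (x : H) : ClosedSubspace H :=
  ⟨Submodule.span ℂ {x}, Submodule.closed_of_finiteDimensional _⟩

theorem mem_lineCS (x : H) : x ∈ (lineCS x).1 :=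
  Submodule.mem_span_singleton_self x

theorem mem_of_lineCS_mem {x : H} (hx : x ≠ 0) {C : Set (ClosedSubspace H)}
    (h0 : zeroCS H ∉ C) (hC : ∀ U ∈ C, ∀ V ∈ C, ∃ W ∈ C, W.1 ≤ U.1 ⊓ V.1)
    (hl : lineCS x ∈ C) {U : ClosedSubspace H} (hU : U ∈ C) : x ∈ U.1 := by
  obtain ⟨W, hW, hle⟩ := hC U hU _ hl
  have hWl : W.1 ≤ Submodule.span ℂ {x} := hle.trans inf_le_right
  rcases (nonzero_span_atom x hx).le_iff.1 hWl with h | h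
  · exact absurd ((Subtype.ext h : W = zeroCS H) ▸ hW) h0
  · exact hle.trans inf_le_left (h ▸ Submodule.mem_span_singleton_self x)

theorem isQuasipointCS_atomic {x : H} (hx : x ≠ 0) :
    IsQuasipointCS {U : ClosedSubspace H | x ∈ U.1} := by
  refine ⟨⟨lineCS x, mem_lineCS x⟩, fun h => hx ((Submodule.mem_bot ℂ).1 h), ?_, ?_⟩
  · intro U hU V hV
    refine ⟨lineCS x, mem_lineCS x, (Submodule.span_singleton_le_iff_mem _ _).2 ⟨hU, hV⟩⟩
  · intro C h0 hC hsub
    exact hsub.antisymm fun U hU => mem_of_lineCS_mem hx h0 hC (hsub (mem_lineCS x)) hU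

theorem IsQuasipointCS.mem_of_le {B : Set (ClosedSubspace H)} (hB : IsQuasipointCS B)
    {U V : ClosedSubspace H} (hU : U ∈ B) (hUV : U.1 ≤ V.1) : V ∈ B := by
  obtain ⟨-, h0, hdir, hmax⟩ := hB
  -- The upward closure of `B` is again directed and omits `0`, so it equals `B`.
  rw [hmax {V | ∃ U ∈ B, U.1 ≤ V.1} ?_ ?_ fun U hU => ⟨U, hU, le_rfl⟩]
  · exact ⟨U, hU, hUV⟩
  · rintro ⟨W, hW, hle⟩
    exact h0 ((Subtype.ext (le_bot_iff.1 hle) : W = zeroCS H) ▸ hW)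
  · rintro V₁ ⟨U₁, hU₁, h₁⟩ V₂ ⟨U₂, hU₂, h₂⟩
    obtain ⟨W, hW, hle⟩ := hdir U₁ hU₁ U₂ hU₂
    exact ⟨W, ⟨W, hW, le_rfl⟩, hle.trans (inf_le_inf h₁ h₂)⟩

/-- The sets `Q_U` form a base of the topology, not just a subbase. -/
theorem exists_QSetCS_subset {s : Set (StoneSpectrumCS H)} (hs : IsOpen s)
    (B : StoneSpectrumCS H) (hB : B ∈ s) : ∃ U ∈ B.1, QSetCS U ⊆ s := by
  induction hs with
  | basic s hs =>
    obtain ⟨U, rfl⟩ := hs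
    exact ⟨U, hB, subset_rfl⟩
  | univ =>
    obtain ⟨U, hU⟩ := B.2.1
    exact ⟨U, hU, Set.subset_univ _⟩
  | inter s t _ _ ihs iht =>
    obtain ⟨U, hU, hUs⟩ := ihs hB.1
    obtain ⟨V, hV, hVt⟩ := iht hB.2
    obtain ⟨W, hW, hle⟩ := B.2.2.2.1 U hU V hV
    exact ⟨W, hW, fun B' hB' => ⟨hUs (B'.2.mem_of_le hB' (hle.trans inf_le_left)),
      hVt (B'.2.mem_of_le hB' (hle.trans inf_le_right))⟩⟩
  | sUnion S _ ih =>
    obtain ⟨t, ht, hBt⟩ := hB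
    obtain ⟨U, hU, hUt⟩ := ih t ht hBt
    exact ⟨U, hU, hUt.trans (Set.subset_sUnion_of_mem ht)⟩

theorem exists_atomic_mem {s : Set (StoneSpectrumCS H)} (hs : IsOpen s)
    (hne : s.Nonempty) :
    ∃ A ∈ s, ∃ x : H, x ≠ 0 ∧ A.1 = {U : ClosedSubspace H | x ∈ U.1} := by
  obtain ⟨B, hB⟩ := hne
  obtain ⟨U, hU, hUs⟩ := exists_QSetCS_subset hs B hB
  have hU0 : U.1 ≠ ⊥ := fun h => B.2.2.1 ((Subtype.ext h : U = zeroCS H) ▸ hU)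
  obtain ⟨x, hxU, hx⟩ := Submodule.exists_mem_ne_zero_of_ne_bot hU0
  exact ⟨⟨_, isQuasipointCS_atomic hx⟩, hUs hxU, x, hx, rfl⟩

end

/-- For `0 ≠ x ∈ H`, the set `B_{ℂx} = {U | x ∈ U}` is a quasipoint (an atomic
one); the atomic quasipoints are precisely the isolated points of the Stone
spectrum `Q(L(H))`, and they form a dense subset of `Q(L(H))`. -/
theorem stmt5 {H : Type*} [NormedAddCommGroup H] [InnerProductSpace ℂ H]
    [CompleteSpace H] :
    (∀ x : H, x ≠ 0 → IsQuasipointCS {U : ClosedSubspace H | x ∈ U.1}) ∧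
    (∀ B : StoneSpectrumCS H,
      (∃ x : H, x ≠ 0 ∧ B.1 = {U : ClosedSubspace H | x ∈ U.1}) ↔
        IsOpen ({B} : Set (StoneSpectrumCS H))) ∧
    Dense {B : StoneSpectrumCS H |
      ∃ x : H, x ≠ 0 ∧ B.1 = {U : ClosedSubspace H | x ∈ U.1}} := by
  refine ⟨fun x hx => isQuasipointCS_atomic hx, fun B => ⟨?_, fun hB => ?_⟩, ?_⟩
  · rintro ⟨x, hx, hBx⟩
    have hQ : ({B} : Set (StoneSpectrumCS H)) = QSetCS (lineCS x) := by
      refine Set.Subset.antisymm (Set.singleton_subset_iff.2 ?_) fun B' hB' => ?_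
      · change lineCS x ∈ B.1
        rw [hBx]
        exact mem_lineCS x
      · refine Subtype.ext (B'.2.2.2.2 B.1 B.2.2.1 B.2.2.2.1 fun U hU => ?_)
        rw [hBx]
        exact mem_of_lineCS_mem hx B'.2.2.1 B'.2.2.2.1 hB' hU
    rw [hQ]
    exact TopologicalSpace.isOpen_generateFrom_of_mem ⟨_, rfl⟩
  · obtain ⟨A, rfl, hA⟩ := exists_atomic_mem hB (Set.singleton_nonempty B)
    exact hA
  · refine dense_iff_inter_open.2 fun s hs hne => ?_
    obtain ⟨A, hAs, hA⟩ := exists_atomic_mem hs hne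
    exact ⟨A, hAs, hA⟩
end

section
/- Let L be a complete lattice and let E be a bounded spectral family in L with observable function f_E(J) := inf{λ ∈ ℝ | E_λ ∈ J} on the set D(L) of dual ideals of L. Then for every nonempty family (J_j)_{j∈I} of dual ideals of L, the intersection ⋂_{j∈I} J_j is a dual ideal and f_E(⋂_{j∈I} J_j) = sup_{j∈I} f_E(J_j). -/
/-!
For a dual ideal `K`, the set `{r | E r ∈ K}` is an up-set of `ℝ` because `E` is monotone and `K`
is upward closed; boundedness of `E` makes it nonempty and bounded below. Intersecting dual ideals
intersects these up-sets, so the infimum can only grow. Conversely, if `c` bounds every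
`obsFun E (J i)` from above, then each `r > c` lies in all of the up-sets, hence in their
intersection, and so the infimum of the intersection is at most `c`.
-/

/-- A dual ideal in a complete lattice: a nonempty subset not containing `⊥`,
closed under binary meets and upward closed. -/
def IsDualIdeal {L : Type*} [CompleteLattice L] (J : Set L) : Prop :=
  J.Nonempty ∧ ⊥ ∉ J ∧ (∀ a ∈ J, ∀ b ∈ J, a ⊓ b ∈ J) ∧ ∀ a ∈ J, ∀ b, a ≤ b → b ∈ J

/-- A spectral family in a complete lattice: monotone, right-continuous, with
infimum `⊥` and supremum `⊤`. -/
def IsSpectralFamily {L : Type*} [CompleteLattice L] (E : ℝ → L) : Prop :=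
  Monotone E ∧ (∀ lam : ℝ, E lam = ⨅ mu ∈ Set.Ioi lam, E mu) ∧
    (⨅ lam : ℝ, E lam) = ⊥ ∧ (⨆ lam : ℝ, E lam) = ⊤

/-- A bounded spectral family. -/
def IsBoundedSpectralFamily {L : Type*} [CompleteLattice L] (E : ℝ → L) : Prop :=
  IsSpectralFamily E ∧ ∃ a b : ℝ, (∀ lam : ℝ, lam < a → E lam = ⊥) ∧
    ∀ lam : ℝ, b ≤ lam → E lam = ⊤

/-- The observable function of a spectral family, defined on (all) subsets of `L`,
of interest on dual ideals: `f_E(J) = inf {λ | E λ ∈ J}`. -/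
noncomputable def obsFun {L : Type*} [CompleteLattice L] (E : ℝ → L) (J : Set L) : ℝ :=
  sInf {lam : ℝ | E lam ∈ J}

/-- The intersection of a nonempty family of dual ideals is a dual ideal, and the
observable function of a bounded spectral family sends the intersection to the
supremum of the values. -/
theorem stmt7 {L : Type*} [CompleteLattice L] (E : ℝ → L)
    (hE : IsBoundedSpectralFamily E) {I : Type*} [Nonempty I]
    (J : I → Set L) (hJ : ∀ i, IsDualIdeal (J i)) :
    IsDualIdeal (⋂ i, J i) ∧
      IsLUB (Set.range fun i => obsFun E (J i)) (obsFun E (⋂ i, J i)) := by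
  obtain ⟨⟨hmono, -, -, -⟩, a, b, ha, hb⟩ := hE
  have top_mem : ∀ {K : Set L}, IsDualIdeal K → ⊤ ∈ K := fun hK =>
    let ⟨x, hx⟩ := hK.1
    hK.2.2.2 x hx ⊤ le_top
  have hI : IsDualIdeal (⋂ i, J i) := by
    refine ⟨⟨⊤, Set.mem_iInter.2 fun i => top_mem (hJ i)⟩, fun h => ?_, fun x hx y hy => ?_,
      fun x hx y hxy => ?_⟩
    · exact (hJ (Classical.arbitrary I)).2.1 (Set.mem_iInter.1 h _)
    · exact Set.mem_iInter.2 fun i =>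
        (hJ i).2.2.1 x (Set.mem_iInter.1 hx i) y (Set.mem_iInter.1 hy i)
    · exact Set.mem_iInter.2 fun i => (hJ i).2.2.2 x (Set.mem_iInter.1 hx i) y hxy
  -- Boundedness of `E` makes the infimum defining `obsFun` a genuine one, not a junk value.
  have hne : ∀ {K : Set L}, IsDualIdeal K → {lam : ℝ | E lam ∈ K}.Nonempty := fun {K} hK =>
    ⟨b, show E b ∈ K from (hb b le_rfl).symm ▸ top_mem hK⟩
  have hbdd : ∀ {K : Set L}, IsDualIdeal K → BddBelow {lam : ℝ | E lam ∈ K} := fun {K} hK =>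
    ⟨a, fun r (hr : E r ∈ K) => not_lt.1 fun h => hK.2.1 (ha r h ▸ hr)⟩
  refine ⟨hI, ?_, fun c hc => ?_⟩
  · rintro _ ⟨i, rfl⟩
    exact csInf_le_csInf (hbdd (hJ i)) (hne hI) fun r hr => Set.mem_iInter.1 hr i
  · refine le_of_forall_gt_imp_ge_of_dense fun r hr => csInf_le (hbdd hI) ?_
    refine Set.mem_iInter.2 fun i => ?_
    obtain ⟨s, hs, hsr⟩ := exists_lt_of_csInf_lt (hne (hJ i)) ((hc ⟨i, rfl⟩).trans_lt hr)
    exact (hJ i).2.2.2 _ hs _ (hmono hsr.le)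
end
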